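/- Let C ⊆ F_2^n be a binary linear code with minimum distance at least 2t+1, and let u, e, e_1, r be natural numbers with u + e − e_1 > t. Then the number of triples (U, E, p) with |U| = u, |E| = e, U ∩ E = ∅, and wt(p) = e_1, for which there exists a codeword c ∈ C with wt(c) = r, d(y^(2), c) ≤ t, and d_E(c) < d_E(0) = u, equals A_r · Σ_{(a,b) ∈ S_{a,b}} Σ_{(λ,γ) ∈ (S_λ × S_γ) ∩ S_<} C(r,a)·C(n−r,b)·C(n−r−b,λ)·C(b,γ)·C(r−a, e−e_1−γ)·C(a, e_1−λ), where S_{a,b} = {(a,b) : a + b ≤ t, r + b = u + e − e_1 + a}, S_λ = {λ : λ ≤ n−r−b, e_1 − λ ≤ a}, S_γ = {γ : γ ≤ b, e − e_1 − γ ≤ r − a}, and S_< = {(λ,γ) : (b − γ) + (a − (e_1 − λ)) < u}. -/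

import Mathlib

/-- First test pattern: erasures filled with `p`. -/
def testPattern1 {n : ℕ} (U E : Finset (Fin n)) (p : Fin n → ZMod 2) :
    Fin n → ZMod 2 :=
  fun j => if j ∈ U then 1 else if j ∈ E then p j else 0

/-- Second test pattern: erasures filled with the complementary pattern `1 + p`. -/
def testPattern2 {n : ℕ} (U E : Finset (Fin n)) (p : Fin n → ZMod 2) :
    Fin n → ZMod 2 :=
  fun j => if j ∈ U then 1 else if j ∈ E then 1 + p j else 0

/-- The erased distance `d_E(c) = |{i ∉ E : c_i ≠ y_i}|`, where `y_i = 1` for `i ∈ U`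
and `y_i = 0` for `i ∉ U ∪ E`. -/
def erasedDist {n : ℕ} (U E : Finset (Fin n)) (c : Fin n → ZMod 2) : ℕ :=
  (Finset.univ.filter
    (fun i => i ∉ E ∧ c i ≠ (if i ∈ U then (1 : ZMod 2) else 0))).card

/-- Binomial coefficient with an integer lower argument (zero when negative). -/
def chooseZ (m : ℕ) (k : ℤ) : ℕ := if 0 ≤ k then m.choose k.toNat else 0

/-!
Encode a triple `(U, E, p)` by the sets `Y = supp y⁽²⁾`, `P = supp p` and `Q = E \ P`; the sets
that arise are exactly those with `P ∩ Y = ∅` and `Q ⊆ Y`. If `R` is the support of a word `c`,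
then `d(y⁽²⁾, c) = |Y ∆ R|` and `d_E(c) = |(Y ∆ R) \ E|`, so whether `c` is a miscorrection
depends only on the four numbers `a = |R \ Y|`, `b = |Y \ R|`, `λ = |P \ R|`, `γ = |Q \ R|`. With
these fixed, `Y` is chosen first (`R \ Y` inside `R` and `Y \ R` outside), then `P` outside `Y`
and `Q` inside `Y`, each again split along `R`; this gives the product of six binomial
coefficients. Balls of radius `t` around distinct codewords are disjoint, so summing over the
codewords counts every triple once.
-/

open Finset
open scoped symmDiff

section Counting

variable {α β : Type*}

theorem card_filter_prod_eq_mul [Fintype α] [Fintype β] (p : α → Prop) (q : α → β → Prop)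
    [DecidablePred p] [∀ x, DecidablePred (q x)] {k : ℕ} (hk : ∀ x, p x → #{y | q x y} = k) :
    #{z : α × β | p z.1 ∧ q z.1 z.2} = #{x | p x} * k := by
  have hfiber (x : α) : (∑ y, if p x ∧ q x y then 1 else 0) = if p x then k else 0 := by
    by_cases hx : p x <;> simp [hx, hk]
  rw [card_filter, ← univ_product_univ, sum_product, sum_congr rfl fun x _ => hfiber x,
    ← sum_filter, sum_const, smul_eq_mul]

variable [DecidableEq α]

theorem card_powerset_filter_card_inter_card_sdiff (X R : Finset α) (i j : ℕ) :
    #{S ∈ X.powerset | #(S ∩ R) = i ∧ #(S \ R) = j} =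
      (#(X ∩ R)).choose i * (#(X \ R)).choose j := by
  rw [← card_powersetCard, ← card_powersetCard, ← card_product]
  refine card_nbij' (fun S => (S ∩ R, S \ R)) (fun S => S.1 ∪ S.2) ?_ ?_ ?_ ?_
  · intro S hS
    simp only [coe_filter, mem_powerset, Set.mem_ofPred_eq] at hS
    simp only [coe_product, Set.mem_prod, mem_coe, mem_powersetCard]
    exact ⟨⟨inter_subset_inter_right hS.1, hS.2.1⟩, sdiff_subset_sdiff hS.1 subset_rfl, hS.2.2⟩
  · rintro ⟨S₁, S₂⟩ hS
    simp only [coe_product, Set.mem_prod, mem_coe, mem_powersetCard] at hS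
    obtain ⟨⟨hS₁, rfl⟩, hS₂, rfl⟩ := hS
    have hinter : (S₁ ∪ S₂) ∩ R = S₁ := by grind
    have hsdiff : (S₁ ∪ S₂) \ R = S₂ := by grind
    simp only [coe_filter, mem_powerset, Set.mem_ofPred_eq, hinter, hsdiff, and_self, and_true]
    grind
  · intro S _
    exact sup_inf_sdiff S R
  · rintro ⟨S₁, S₂⟩ hS
    simp only [coe_product, Set.mem_prod, mem_coe, mem_powersetCard] at hS
    exact Prod.ext (by grind) (by grind)

theorem card_powerset_filter_card_card_sdiff (X R : Finset α) (k : ℤ) (j : ℕ) :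
    #{S ∈ X.powerset | (#S : ℤ) = k ∧ #(S \ R) = j} =
      (#(X \ R)).choose j * chooseZ #(X ∩ R) (k - j) := by
  rw [chooseZ]
  split_ifs with hk
  · rw [mul_comm, ← card_powerset_filter_card_inter_card_sdiff]
    refine congrArg card (filter_congr fun S _ => ?_)
    have hsplit := card_inter_add_card_sdiff S R
    omega
  · rw [mul_zero, card_eq_zero, filter_eq_empty_iff]
    intro S _
    have hsplit := card_inter_add_card_sdiff S R
    omega

theorem card_filter_card_sdiff_card_sdiff [Fintype α] (R : Finset α) (a b : ℕ) :
    #{Y : Finset α | #(R \ Y) = a ∧ #(Y \ R) = b} =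
      (#R).choose a * (Fintype.card α - #R).choose b := by
  have hcount := card_powerset_filter_card_inter_card_sdiff univ R a b
  rw [powerset_univ, univ_inter, ← compl_eq_univ_sdiff, card_compl] at hcount
  rw [← hcount]
  refine card_bijective (R ∆ ·) (symmDiff_right_involutive R).bijective fun Y => ?_
  have hinter : R ∆ Y ∩ R = R \ Y := by grind [mem_symmDiff]
  have hsdiff : R ∆ Y \ R = Y \ R := by grind [mem_symmDiff]
  simp only [mem_filter_univ, hinter, hsdiff]

theorem card_symmDiff_eq_card_sdiff_add_card_sdiff (s t : Finset α) :
    #(s ∆ t) = #(s \ t) + #(t \ s) :=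
  card_union_of_disjoint disjoint_sdiff_sdiff

theorem card_add_card_sdiff_comm (s t : Finset α) : #s + #(t \ s) = #t + #(s \ t) := by
  rw [add_comm, card_sdiff_add_card, add_comm, card_sdiff_add_card, union_comm]

variable {Y P Q R : Finset α}

theorem card_symmDiff_sdiff_union_add (hP : Disjoint P Y) (hQ : Q ⊆ Y) :
    #(Y ∆ R \ (P ∪ Q)) + #P + #(Q \ R) = #(R \ Y) + #(Y \ R) + #(P \ R) := by
  have hinter : Y ∆ R ∩ (P ∪ Q) = P ∩ R ∪ Q \ R := by grind [mem_symmDiff, disjoint_left]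
  have hdisj : Disjoint (P ∩ R) (Q \ R) := by grind [disjoint_left]
  have hcard := card_inter_add_card_sdiff (Y ∆ R) (P ∪ Q)
  rw [hinter, card_union_of_disjoint hdisj, card_symmDiff_eq_card_sdiff_add_card_sdiff] at hcard
  have hcardP := card_inter_add_card_sdiff P R
  omega

theorem card_sdiff_add_card_add_card_sdiff_le [Fintype α] (hP : Disjoint P Y) :
    #(P \ R) + #R + #(Y \ R) ≤ Fintype.card α := by
  have hdisj : Disjoint (P \ R) (R ∪ Y) := by grind [disjoint_left]
  calc #(P \ R) + #R + #(Y \ R) = #(P \ R ∪ (R ∪ Y)) := by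
        rw [card_union_of_disjoint hdisj, union_comm, ← card_sdiff_add_card, add_assoc, add_comm #R]
    _ ≤ Fintype.card α := card_le_univ _

theorem card_le_card_sdiff_add_card_sdiff (hP : Disjoint P Y) : #P ≤ #(P \ R) + #(R \ Y) := by
  have hsub : P ∩ R ⊆ R \ Y := by grind [disjoint_left]
  have hcard := card_inter_add_card_sdiff P R
  have hle := card_le_card hsub
  omega

theorem card_add_card_sdiff_le (hQ : Q ⊆ Y) : #Q + #(R \ Y) ≤ #(Q \ R) + #R := by
  have hle := card_le_card (inter_subset_inter_right (u := R) hQ)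
  have hcardQ := card_inter_add_card_sdiff Q R
  have hcardR := card_inter_add_card_sdiff R Y
  rw [inter_comm] at hcardR
  omega

end Counting

section Configurations

variable {α : Type*} [Fintype α] [DecidableEq α]

/-- The set triples `(Y, P, Q)` encoding the pairs of an error pattern and `e` erasures filled with
a pattern of weight `e₁`: `Y` is the support of the second test pattern, `P` the support of the
filling, and `Q` the set of erasures filled with `0` (hence with `1` in the second test pattern). -/
def erasureConfigs (α : Type*) [Fintype α] [DecidableEq α] (e e₁ : ℕ) :
    Finset (Finset α × Finset α × Finset α) :=
  {q | Disjoint q.2.1 q.1 ∧ q.2.2 ⊆ q.1 ∧ #q.2.1 = e₁ ∧ #q.2.2 + e₁ = e}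

/-- The configurations `(Y, P, Q)` with `u` errors that are miscorrected to a word with
support `R`. -/
def miscorrectionConfigs (t u e e₁ : ℕ) (R : Finset α) :
    Finset (Finset α × Finset α × Finset α) :=
  {q ∈ erasureConfigs α e e₁ |
    #q.1 + e₁ = u + e ∧ #(q.1 ∆ R) ≤ t ∧ #(q.1 ∆ R \ (q.2.1 ∪ q.2.2)) < u}

/-- The numbers `((a, b), (λ, γ))` attached to a configuration `(Y, P, Q)` and a support `R`. The
type is a sigma type because the paper's range of `(λ, γ)` depends on `(a, b)`. -/
def profile (R : Finset α) (q : Finset α × Finset α × Finset α) : (_ : ℕ × ℕ) × ℕ × ℕ :=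
  ⟨(#(R \ q.1), #(q.1 \ R)), (#(q.2.1 \ R), #(q.2.2 \ R))⟩

/-- The index set `S_{a,b}`. -/
def distanceProfiles (t u e e₁ r : ℕ) : Finset (ℕ × ℕ) :=
  (range (t + 1) ×ˢ range (t + 1)).filter
    (fun ab => ab.1 + ab.2 ≤ t ∧ (r : ℤ) + ab.2 = u + e - e₁ + ab.1)

/-- The index set `(S_λ × S_γ) ∩ S_<` belonging to `(a, b)`. -/
def erasureProfiles (n u e e₁ r : ℕ) (ab : ℕ × ℕ) : Finset (ℕ × ℕ) :=
  (range (n + 1) ×ˢ range (n + 1)).filter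
    (fun lg =>
      ((lg.1 : ℤ) ≤ n - r - ab.2 ∧ (e₁ : ℤ) - lg.1 ≤ ab.1) ∧
      ((lg.2 : ℤ) ≤ ab.2 ∧ (e : ℤ) - e₁ - lg.2 ≤ (r : ℤ) - ab.1) ∧
      ((ab.2 : ℤ) - lg.2 + ((ab.1 : ℤ) - ((e₁ : ℤ) - lg.1)) < u))

/-- The summand of the counting formula: the number of configurations with a given profile. -/
def profileCount (n e e₁ r : ℕ) (ab lg : ℕ × ℕ) : ℕ :=
  r.choose ab.1 * (n - r).choose ab.2 * (n - r - ab.2).choose lg.1 *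
    ab.2.choose lg.2 * chooseZ (r - ab.1) ((e : ℤ) - e₁ - lg.2) *
    chooseZ ab.1 ((e₁ : ℤ) - lg.1)

theorem card_filter_disjoint_subset (Y R : Finset α) (k₁ k₂ : ℤ) (l g : ℕ) :
    #{z : Finset α × Finset α | (Disjoint z.1 Y ∧ (#z.1 : ℤ) = k₁ ∧ #(z.1 \ R) = l) ∧
        z.2 ⊆ Y ∧ (#z.2 : ℤ) = k₂ ∧ #(z.2 \ R) = g} =
      ((Fintype.card α - #R - #(Y \ R)).choose l * chooseZ #(R \ Y) (k₁ - l)) *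
        ((#(Y \ R)).choose g * chooseZ (#R - #(R \ Y)) (k₂ - g)) := by
  have hcompl_inter : Yᶜ ∩ R = R \ Y := by rw [inter_comm, sdiff_eq_inter_compl]
  have hcompl_sdiff : #(Yᶜ \ R) = Fintype.card α - #R - #(Y \ R) := by
    rw [sdiff_eq_inter_compl, ← compl_union, card_compl, ← card_sdiff_add_card, Nat.sub_sub,
      add_comm]
  have hinter : #(Y ∩ R) = #R - #(R \ Y) := by
    rw [inter_comm, ← card_inter_add_card_sdiff R Y, Nat.add_sub_cancel]
  rw [← hcompl_sdiff, ← hinter, ← hcompl_inter, ← card_powerset_filter_card_card_sdiff,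
    ← card_powerset_filter_card_card_sdiff, ← card_product]
  congr 1
  ext z
  simp only [mem_filter, mem_univ, true_and, mem_product, mem_powerset,
    subset_compl_iff_disjoint_right]

theorem card_filter_profile_eq (R : Finset α) (e e₁ : ℕ) (ab lg : ℕ × ℕ) :
    #{q ∈ erasureConfigs α e e₁ | profile R q = ⟨ab, lg⟩} =
      profileCount (Fintype.card α) e e₁ #R ab lg := by
  obtain ⟨a, b⟩ := ab
  obtain ⟨l, g⟩ := lg
  have hchoice := card_filter_prod_eq_mul
    (fun Y : Finset α => #(R \ Y) = a ∧ #(Y \ R) = b)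
    (fun Y (z : Finset α × Finset α) =>
      (Disjoint z.1 Y ∧ (#z.1 : ℤ) = e₁ ∧ #(z.1 \ R) = l) ∧
        z.2 ⊆ Y ∧ (#z.2 : ℤ) = e - e₁ ∧ #(z.2 \ R) = g)
    (fun Y hY => by
      simpa only [hY.1, hY.2] using card_filter_disjoint_subset Y R e₁ (e - e₁) l g)
  rw [card_filter_card_sdiff_card_sdiff] at hchoice
  refine (congrArg card ?_).trans (hchoice.trans ?_)
  · ext q
    simp only [erasureConfigs, profile, mem_filter, mem_univ, true_and, Sigma.mk.injEq,
      heq_eq_eq, Prod.mk.injEq]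
    grind
  · rw [profileCount]
    ring

theorem profile_mem_sigma_iff {R : Finset α} {t u e e₁ : ℕ} {q : Finset α × Finset α × Finset α}
    (hq : q ∈ erasureConfigs α e e₁) :
    profile R q ∈ (distanceProfiles t u e e₁ #R).sigma
        (erasureProfiles (Fintype.card α) u e e₁ #R) ↔
      #q.1 + e₁ = u + e ∧ #(q.1 ∆ R) ≤ t ∧ #(q.1 ∆ R \ (q.2.1 ∪ q.2.2)) < u := by
  obtain ⟨Y, P, Q⟩ := q
  simp only [erasureConfigs, mem_filter_univ] at hq
  obtain ⟨hP, hQ, hcardP, hcardQ⟩ := hq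
  have hcardY := card_add_card_sdiff_comm Y R
  have hdist := card_symmDiff_eq_card_sdiff_add_card_sdiff Y R
  have herased := card_symmDiff_sdiff_union_add (R := R) hP hQ
  have hambient := card_sdiff_add_card_add_card_sdiff_le (R := R) hP
  have hboundP := card_le_card_sdiff_add_card_sdiff (R := R) hP
  have hboundQ := card_add_card_sdiff_le (R := R) hQ
  have hQR : #(Q \ R) ≤ #(Y \ R) := card_le_card (sdiff_subset_sdiff hQ subset_rfl)
  simp only [profile, distanceProfiles, erasureProfiles, mem_sigma, mem_filter, mem_product,
    mem_range]
  omega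

theorem card_miscorrectionConfigs (t u e e₁ : ℕ) (R : Finset α) :
    #(miscorrectionConfigs t u e e₁ R) =
      ∑ ab ∈ distanceProfiles t u e e₁ #R,
        ∑ lg ∈ erasureProfiles (Fintype.card α) u e e₁ #R ab,
          profileCount (Fintype.card α) e e₁ #R ab lg := by
  rw [miscorrectionConfigs, ← filter_congr fun q hq => profile_mem_sigma_iff hq,
    ← sum_card_fiberwise_eq_card_filter, sum_sigma]
  simp only [card_filter_profile_eq]

end Configurations

section Support

variable {ι : Type*} [Fintype ι]

/-- The support of a word, as a finset; its cardinality is the Hamming weight by definition. -/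
def wordSupport {M : Type*} [Zero M] [DecidableEq M] (x : ι → M) : Finset ι :=
  {i | x i ≠ 0}

theorem wordSupport_subset {M : Type*} [Zero M] [DecidableEq M] {E : Finset ι} {x : ι → M}
    (hx : ∀ i ∉ E, x i = 0) : wordSupport x ⊆ E := by
  grind [wordSupport]

theorem wordSupport_ite_mem [DecidableEq ι] {M : Type*} [Zero M] [One M] [NeZero (1 : M)]
    [DecidableEq M] (P : Finset ι) : wordSupport (fun i => if i ∈ P then (1 : M) else 0) = P := by
  ext i
  simp [wordSupport]

theorem ite_mem_wordSupport [DecidableEq ι] (x : ι → ZMod 2) :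
    (fun i => if i ∈ wordSupport x then (1 : ZMod 2) else 0) = x := by
  funext i
  have htwo : ∀ z : ZMod 2, (if z ≠ 0 then (1 : ZMod 2) else 0) = z := by decide
  simpa only [wordSupport, mem_filter_univ] using htwo (x i)

theorem mem_symmDiff_wordSupport [DecidableEq ι] {x y : ι → ZMod 2} {i : ι} :
    i ∈ wordSupport x ∆ wordSupport y ↔ x i ≠ y i := by
  have htwo : ∀ z w : ZMod 2, (z ≠ 0 ∧ ¬w ≠ 0 ∨ w ≠ 0 ∧ ¬z ≠ 0) ↔ z ≠ w := by decide
  simpa only [mem_symmDiff, wordSupport, mem_filter_univ] using htwo (x i) (y i)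

theorem hammingDist_eq_card_symmDiff [DecidableEq ι] (x y : ι → ZMod 2) :
    hammingDist x y = #(wordSupport x ∆ wordSupport y) := by
  rw [hammingDist]
  congr 1
  ext i
  rw [mem_filter_univ, mem_symmDiff_wordSupport]

end Support

section TestPattern

variable {n : ℕ}

theorem wordSupport_testPattern2 (U E : Finset (Fin n)) (p : Fin n → ZMod 2) :
    wordSupport (testPattern2 U E p) = U ∪ E \ wordSupport p := by
  have htwo : ∀ z : ZMod 2, 1 + z ≠ 0 ↔ z = 0 := by decide
  ext i
  rw [wordSupport, mem_filter_univ, testPattern2]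
  split_ifs <;> simp_all [wordSupport]

theorem erasedDist_eq_card_symmDiff_sdiff (U E : Finset (Fin n)) (p c : Fin n → ZMod 2) :
    erasedDist U E c = #(wordSupport (testPattern2 U E p) ∆ wordSupport c \ E) := by
  rw [erasedDist]
  congr 1
  ext i
  rw [mem_filter_univ, mem_sdiff, mem_symmDiff_wordSupport, and_comm, ne_comm]
  refine and_congr_left fun hi => ?_
  rw [testPattern2, if_neg hi]

/-- The triples `(U, E, p)` that are miscorrected to the word `c`. A filling pattern `p : E → F₂` is
represented by its extension by zero. -/
def miscorrections (t u e e₁ : ℕ) (c : Fin n → ZMod 2) :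
    Finset (Finset (Fin n) × Finset (Fin n) × (Fin n → ZMod 2)) :=
  {T | #T.1 = u ∧ #T.2.1 = e ∧ Disjoint T.1 T.2.1 ∧
    (∀ i ∉ T.2.1, T.2.2 i = 0) ∧ hammingNorm T.2.2 = e₁ ∧
    hammingDist (testPattern2 T.1 T.2.1 T.2.2) c ≤ t ∧ erasedDist T.1 T.2.1 c < u}

/-- The configuration `(Y, P, Q)` encoding `(U, E, p)`. -/
def toConfig (T : Finset (Fin n) × Finset (Fin n) × (Fin n → ZMod 2)) :
    Finset (Fin n) × Finset (Fin n) × Finset (Fin n) :=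
  (wordSupport (testPattern2 T.1 T.2.1 T.2.2), wordSupport T.2.2, T.2.1 \ wordSupport T.2.2)

/-- The triple `(U, E, p)` encoded by a configuration `(Y, P, Q)`. -/
def ofConfig (q : Finset (Fin n) × Finset (Fin n) × Finset (Fin n)) :
    Finset (Fin n) × Finset (Fin n) × (Fin n → ZMod 2) :=
  (q.1 \ q.2.2, q.2.1 ∪ q.2.2, fun i => if i ∈ q.2.1 then 1 else 0)

theorem ofConfig_toConfig {U E : Finset (Fin n)} {p : Fin n → ZMod 2} (hUE : Disjoint U E)
    (hp : ∀ i ∉ E, p i = 0) : ofConfig (toConfig (U, E, p)) = (U, E, p) := by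
  have hdisj : Disjoint U (E \ wordSupport p) := hUE.mono_right sdiff_subset
  simp only [ofConfig, toConfig, wordSupport_testPattern2, ite_mem_wordSupport,
    union_sdiff_cancel_right hdisj, union_sdiff_of_subset (wordSupport_subset hp)]

theorem toConfig_ofConfig {Y P Q : Finset (Fin n)} (hP : Disjoint P Y) (hQ : Q ⊆ Y) :
    toConfig (ofConfig (Y, P, Q)) = (Y, P, Q) := by
  have hdisj : Disjoint P Q := hP.mono_right hQ
  simp only [toConfig, ofConfig, wordSupport_testPattern2, wordSupport_ite_mem,
    union_sdiff_cancel_left hdisj, sdiff_union_of_subset hQ]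

theorem toConfig_mem_miscorrectionConfigs_iff {U E : Finset (Fin n)} {p : Fin n → ZMod 2}
    (hUE : Disjoint U E) (hp : ∀ i ∉ E, p i = 0) {t u e e₁ : ℕ} {c : Fin n → ZMod 2} :
    toConfig (U, E, p) ∈ miscorrectionConfigs t u e e₁ (wordSupport c) ↔
      (U, E, p) ∈ miscorrections t u e e₁ c := by
  have hPE := wordSupport_subset hp
  have hcardE := card_sdiff_add_card_eq_card hPE
  have hcardY : #(wordSupport (testPattern2 U E p)) = #U + #(E \ wordSupport p) := by
    rw [wordSupport_testPattern2, card_union_of_disjoint (hUE.mono_right sdiff_subset)]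
  have hP : Disjoint (wordSupport p) (wordSupport (testPattern2 U E p)) := by
    rw [wordSupport_testPattern2, disjoint_union_right]
    exact ⟨(hUE.mono_right hPE).symm, disjoint_sdiff⟩
  have hQ : E \ wordSupport p ⊆ wordSupport (testPattern2 U E p) := by
    rw [wordSupport_testPattern2]
    exact subset_union_right
  have hweight : hammingNorm p = #(wordSupport p) := rfl
  simp only [miscorrectionConfigs, miscorrections, erasureConfigs, toConfig, mem_filter, mem_univ,
    true_and, hP, hQ, hUE, hweight, union_sdiff_of_subset hPE, hammingDist_eq_card_symmDiff,
    erasedDist_eq_card_symmDiff_sdiff U E p c]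
  grind

theorem card_miscorrections_eq_card_miscorrectionConfigs (t u e e₁ : ℕ) (c : Fin n → ZMod 2) :
    #(miscorrections t u e e₁ c) = #(miscorrectionConfigs t u e e₁ (wordSupport c)) := by
  have hvalid {T} (hT : T ∈ miscorrections t u e e₁ c) :
      Disjoint T.1 T.2.1 ∧ ∀ i ∉ T.2.1, T.2.2 i = 0 := by
    grind [miscorrections]
  have hconfig {q} (hq : q ∈ miscorrectionConfigs t u e e₁ (wordSupport c)) :
      Disjoint q.2.1 q.1 ∧ q.2.2 ⊆ q.1 := by
    grind [miscorrectionConfigs, erasureConfigs]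
  refine card_nbij' toConfig ofConfig (fun T hT => ?_) (fun q hq => ?_)
    (fun T hT => ofConfig_toConfig (hvalid hT).1 (hvalid hT).2)
    (fun q hq => toConfig_ofConfig (hconfig hq).1 (hconfig hq).2)
  · exact (toConfig_mem_miscorrectionConfigs_iff (hvalid hT).1 (hvalid hT).2).2 hT
  · obtain ⟨hP, hQ⟩ := hconfig hq
    have hdisj : Disjoint (q.1 \ q.2.2) (q.2.1 ∪ q.2.2) := by grind [disjoint_left]
    refine (toConfig_mem_miscorrectionConfigs_iff hdisj (by grind)).1 ?_
    exact (toConfig_ofConfig hP hQ).symm ▸ hq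

theorem card_miscorrections (t u e e₁ : ℕ) (c : Fin n → ZMod 2) :
    #(miscorrections t u e e₁ c) =
      ∑ ab ∈ distanceProfiles t u e e₁ (hammingNorm c),
        ∑ lg ∈ erasureProfiles n u e e₁ (hammingNorm c) ab,
          profileCount n e e₁ (hammingNorm c) ab lg := by
  have hcount := card_miscorrectionConfigs t u e e₁ (wordSupport c)
  rw [Fintype.card_fin] at hcount
  exact (card_miscorrections_eq_card_miscorrectionConfigs t u e e₁ c).trans hcount

end TestPattern

section MinimumDistance

variable {ι : Type*} [Fintype ι] {β : ι → Type*} [∀ i, DecidableEq (β i)]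

theorem eq_of_hammingDist_le {C : Set (∀ i, β i)} {t : ℕ}
    (hC : C.Pairwise fun c c' => 2 * t + 1 ≤ hammingDist c c') {c c' y : ∀ i, β i}
    (hc : c ∈ C) (hc' : c' ∈ C) (hy : hammingDist y c ≤ t) (hy' : hammingDist y c' ≤ t) :
    c = c' := by
  refine hC.eq hc hc' fun hle => ?_
  have htriangle := hammingDist_triangle_left c c' y
  omega

theorem pairwise_le_hammingDist_of_le_hammingNorm [∀ i, AddGroup (β i)]
    (C : AddSubgroup (∀ i, β i)) {d : ℕ} (hC : ∀ c ∈ C, c ≠ 0 → d ≤ hammingNorm c) :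
    (C : Set (∀ i, β i)).Pairwise fun c c' => d ≤ hammingDist c c' := by
  intro c hc c' hc' hne
  rw [hammingDist_eq_hammingNorm]
  exact hC _ (C.add_mem (C.neg_mem hc) hc') fun h => hne (neg_add_eq_zero.1 h)

end MinimumDistance

theorem eaed_miscorrection_count_L_general {n t : ℕ} (C : Set (Fin n → ZMod 2))
    [DecidablePred (· ∈ C)] (hC : C.Pairwise fun c c' => 2 * t + 1 ≤ hammingDist c c')
    (u e e₁ r : ℕ) :
    #{T : Finset (Fin n) × Finset (Fin n) × (Fin n → ZMod 2) |
        #T.1 = u ∧ #T.2.1 = e ∧ Disjoint T.1 T.2.1 ∧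
        (∀ i ∉ T.2.1, T.2.2 i = 0) ∧ hammingNorm T.2.2 = e₁ ∧
        ∃ c ∈ C, hammingNorm c = r ∧
          hammingDist (testPattern2 T.1 T.2.1 T.2.2) c ≤ t ∧ erasedDist T.1 T.2.1 c < u} =
      #{c : Fin n → ZMod 2 | c ∈ C ∧ hammingNorm c = r} *
        ∑ ab ∈ distanceProfiles t u e e₁ r, ∑ lg ∈ erasureProfiles n u e e₁ r ab,
          profileCount n e e₁ r ab lg := by
  have hdisj : Set.PairwiseDisjoint {c | c ∈ C ∧ hammingNorm c = r}
      (miscorrections t u e e₁) := by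
    intro c hc c' hc' hne
    refine disjoint_left.2 fun T hT hT' => hne ?_
    simp only [miscorrections, mem_filter_univ] at hT hT'
    exact eq_of_hammingDist_le hC hc.1 hc'.1 hT.2.2.2.2.2.1 hT'.2.2.2.2.2.1
  rw [← sum_const_nat fun c hc =>
      (mem_filter_univ c |>.1 hc).2 ▸ card_miscorrections t u e e₁ c,
    ← card_biUnion (by simpa only [coe_filter_univ] using hdisj)]
  congr 1
  ext T
  simp only [miscorrections, mem_biUnion, mem_filter_univ]
  tauto

/-- For a binary linear code with minimum distance at least `2t+1`
and `u + e − e₁ > t`, the number of triples `(U, E, p)` for which some codeword `c`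
of weight `r` satisfies `d(y⁽²⁾, c) ≤ t` and `d_E(c) < d_E(0) = u` equals
`A_r · ∑_{(a,b) ∈ S_{a,b}} ∑_{(λ,γ) ∈ (S_λ × S_γ) ∩ S_<}
  C(r,a)·C(n−r,b)·C(n−r−b,λ)·C(b,γ)·C(r−a, e−e₁−γ)·C(a, e₁−λ)`. -/
theorem eaed_miscorrection_count_L {n t : ℕ}
    (C : Submodule (ZMod 2) (Fin n → ZMod 2)) [DecidablePred (· ∈ C)]
    (hdmin : ∀ c ∈ C, c ≠ 0 → 2 * t + 1 ≤ hammingNorm c)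
    (u e e₁ r : ℕ) (h : (t : ℤ) < u + e - e₁) :
    (Finset.univ.filter
        (fun T : Finset (Fin n) × Finset (Fin n) × (Fin n → ZMod 2) =>
          T.1.card = u ∧ T.2.1.card = e ∧ Disjoint T.1 T.2.1 ∧
          (∀ i ∉ T.2.1, T.2.2 i = 0) ∧ hammingNorm T.2.2 = e₁ ∧
          ∃ c ∈ C, hammingNorm c = r ∧
            hammingDist (testPattern2 T.1 T.2.1 T.2.2) c ≤ t ∧
            erasedDist T.1 T.2.1 c < u)).card =
      (Finset.univ.filter
          (fun c : Fin n → ZMod 2 => c ∈ C ∧ hammingNorm c = r)).card *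
        ∑ ab ∈ (Finset.range (t + 1) ×ˢ Finset.range (t + 1)).filter
            (fun ab => ab.1 + ab.2 ≤ t ∧
              (r : ℤ) + ab.2 = u + e - e₁ + ab.1),
          ∑ lg ∈ (Finset.range (n + 1) ×ˢ Finset.range (n + 1)).filter
              (fun lg =>
                ((lg.1 : ℤ) ≤ n - r - ab.2 ∧ (e₁ : ℤ) - lg.1 ≤ ab.1) ∧
                ((lg.2 : ℤ) ≤ ab.2 ∧ (e : ℤ) - e₁ - lg.2 ≤ (r : ℤ) - ab.1) ∧
                ((ab.2 : ℤ) - lg.2 + ((ab.1 : ℤ) - ((e₁ : ℤ) - lg.1)) < u)),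
            r.choose ab.1 * (n - r).choose ab.2 * (n - r - ab.2).choose lg.1 *
              ab.2.choose lg.2 * chooseZ (r - ab.1) ((e : ℤ) - e₁ - lg.2) *
              chooseZ ab.1 ((e₁ : ℤ) - lg.1) := by
  exact eaed_miscorrection_count_L_general (C : Set (Fin n → ZMod 2))
    (pairwise_le_hammingDist_of_le_hammingNorm C.toAddSubgroup hdmin) u e e₁ r
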